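/- Fix constants 0 < q < p < 1. There exist constants L > 0 and L₂ > 0 such that for all sufficiently large n and all integers Δ with 1 ≤ Δ ≤ n/L₂, the following holds: if S ~ Bin(n, q) and D₊ ~ Bin(n+Δ−1, p) are independent, then P[S = D₊] ≥ (1/L)·P[S > D₊]. -/

import Mathlib

open Finset

/-!
Put `m = n + Δ - 1`, and let `b`, `c` be the mass functions of `Bin(n, q)` and `Bin(m, p)`.
Choose `q < t < p` and `T = ⌊t n⌋`. As `q < t < p` and `n ≤ m`, there is a `ρ < 1`, not depending
on `n` and `Δ`, such that `b (s + 1) ≤ ρ * b s` for `s ≥ T` and `c d ≤ ρ * c (d + 1)` for `d < T`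
(`binomPMF_right_decay`, `binomPMF_left_decay`).

Given `d < s`, let `e` be the median of `d`, `s` and `T`. Lowering `s` to `e` stays to the right of
`T`, or does nothing, and raising `d` to `e` stays to its left, or does nothing. Hence
`b s * c d ≤ ρ ^ (s - e) * ρ ^ (e - d) * (b e * c e)`: every off-diagonal term is paid for by a
diagonal term, with geometric decay in both distances to it (`exists_diagonal_bound`). Summing over
all `s`, `d`, `e`, each diagonal term is charged at most `(2 / (1 - ρ)) ^ 2` times
(`sum_offdiag_le`), so `L = (2 / (1 - ρ)) ^ 2` works. The argument uses only `Δ ≥ 1` and `n` large,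
and therefore `L₂ = 1` is enough.
-/

/-- Probability mass function of the binomial distribution `Bin(m, r)`. -/
noncomputable def binomPMF (m : ℕ) (r : ℝ) (k : ℕ) : ℝ :=
  (m.choose k : ℝ) * r ^ k * (1 - r) ^ (m - k)

/-- `P[X ∈ P]` for `X ~ Bin(m, r)`. -/
noncomputable def binomProb (m : ℕ) (r : ℝ) (P : ℕ → Prop) : ℝ :=
  ∑ k ∈ Finset.range (m + 1), Set.indicator {k | P k} (binomPMF m r) k

/-- `P[(X, Y) ∈ P]` for independent `X ~ Bin(m₁, r₁)` and `Y ~ Bin(m₂, r₂)`. -/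
noncomputable def binomProb2 (m₁ : ℕ) (r₁ : ℝ) (m₂ : ℕ) (r₂ : ℝ) (P : ℕ → ℕ → Prop) : ℝ :=
  ∑ j ∈ Finset.range (m₁ + 1), ∑ k ∈ Finset.range (m₂ + 1),
    Set.indicator {jk : ℕ × ℕ | P jk.1 jk.2}
      (fun jk => binomPMF m₁ r₁ jk.1 * binomPMF m₂ r₂ jk.2) (j, k)

lemma binomPMF_nonneg {m : ℕ} {r : ℝ} (h0 : 0 ≤ r) (h1 : r ≤ 1) (k : ℕ) :
    0 ≤ binomPMF m r k := by
  have : 0 ≤ 1 - r := by linarith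
  unfold binomPMF
  positivity

lemma binomPMF_succ {m k : ℕ} (r : ℝ) (hk : k < m) :
    binomPMF m r (k + 1) * (((k : ℝ) + 1) * (1 - r)) = binomPMF m r k * (((m : ℝ) - k) * r) := by
  have h : (m.choose (k + 1) : ℝ) * ((k : ℝ) + 1) = m.choose k * ((m : ℝ) - k) := by
    have := congrArg (Nat.cast (R := ℝ)) (Nat.choose_succ_right_eq m k)
    push_cast [Nat.cast_sub hk.le] at this
    exact this
  obtain ⟨l, rfl⟩ := Nat.exists_eq_add_of_lt hk
  unfold binomPMF
  rw [show k + l + 1 - (k + 1) = l by omega, show k + l + 1 - k = l + 1 by omega]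
  linear_combination (r ^ (k + 1) * (1 - r) ^ (l + 1)) * h

lemma binomPMF_succ_le {m k : ℕ} {r ρ : ℝ} (h0 : 0 < r) (h1 : r < 1) (hρ : 0 ≤ ρ)
    (h : ((m : ℝ) - k) * r ≤ ρ * (((k : ℝ) + 1) * (1 - r))) :
    binomPMF m r (k + 1) ≤ ρ * binomPMF m r k := by
  have hb := binomPMF_nonneg (m := m) h0.le h1.le k
  rcases lt_or_ge k m with hk | hk
  · have hpos : 0 < ((k : ℝ) + 1) * (1 - r) := mul_pos (by positivity) (by linarith)
    refine le_of_mul_le_mul_right ?_ hpos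
    rw [binomPMF_succ r hk]
    calc _ ≤ binomPMF m r k * (ρ * (((k : ℝ) + 1) * (1 - r))) := by gcongr
      _ = _ := by ring
  · have : binomPMF m r (k + 1) = 0 := by
      simp [binomPMF, Nat.choose_eq_zero_of_lt (Nat.lt_succ_of_le hk)]
    rw [this]
    positivity

/-- To the right of `⌊t n⌋` with `t > q`, the mass function of `Bin(n, q)` decays geometrically.
The hypothesis `hn` absorbs the error made by rounding `t n` down. -/
lemma binomPMF_right_decay {n : ℕ} {q t ρ : ℝ} (hq : 0 < q) (hq1 : q < 1) (hρ : 0 ≤ ρ)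
    (hn : q ≤ n * (ρ * ((1 - q) * t) - q * (1 - t))) {s : ℕ} (hs : ⌊t * n⌋₊ ≤ s) :
    binomPMF n q (s + 1) ≤ ρ * binomPMF n q s := by
  apply binomPMF_succ_le hq hq1 hρ
  have h1 : t * n < s + 1 := (Nat.lt_floor_add_one _).trans_le (by gcongr)
  have h2 : ((n : ℝ) - s) * q ≤ (n - t * n + 1) * q := by gcongr; linarith
  have h3 : ρ * (t * n * (1 - q)) ≤ ρ * (((s : ℝ) + 1) * (1 - q)) := by
    have : 0 ≤ 1 - q := by linarith
    gcongr
  linarith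

/-- To the left of `⌊t n⌋` with `t < p`, the mass function of `Bin(m, p)`, `m ≥ n`, grows
geometrically. -/
lemma binomPMF_left_decay {n m : ℕ} (hnm : n ≤ m) {p t ρ : ℝ} (hp : 0 < p) (hp1 : p < 1)
    (ht : 0 < t) (ht1 : t < 1) (hρ : 0 ≤ ρ) (h : t * (1 - p) ≤ ρ * ((1 - t) * p))
    {d : ℕ} (hd : d < ⌊t * n⌋₊) :
    binomPMF m p d ≤ ρ * binomPMF m p (d + 1) := by
  have hb := binomPMF_nonneg (m := m) hp.le hp1.le (d + 1)
  have h1 : (d : ℝ) + 1 ≤ t * m := by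
    have h2 : ((d + 1 : ℕ) : ℝ) ≤ t * n :=
      (Nat.cast_le.mpr hd).trans (Nat.floor_le (by positivity))
    push_cast at h2
    exact h2.trans (by gcongr)
  have hm : t * m ≤ m := mul_le_of_le_one_left (by positivity) ht1.le
  have hdm : (d : ℝ) < m := by linarith
  have hp' : 0 < 1 - p := by linarith
  refine le_of_mul_le_mul_right ?_ (mul_pos (sub_pos.mpr hdm) hp)
  rw [← binomPMF_succ p (by exact_mod_cast hdm)]
  have h3 : ((d : ℝ) + 1) * (1 - p) ≤ ρ * (((m : ℝ) - d) * p) :=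
    calc ((d : ℝ) + 1) * (1 - p) ≤ t * m * (1 - p) := by gcongr
      _ = m * (t * (1 - p)) := by ring
      _ ≤ m * (ρ * ((1 - t) * p)) := by gcongr
      _ = ρ * ((m - t * m) * p) := by ring
      _ ≤ _ := by gcongr; linarith
  calc _ ≤ binomPMF m p (d + 1) * (ρ * (((m : ℝ) - d) * p)) := by gcongr
    _ = _ := by ring

lemma right_iterate {b : ℕ → ℝ} {ρ : ℝ} (hρ : 0 ≤ ρ) {T : ℕ}
    (hb : ∀ s, T ≤ s → b (s + 1) ≤ ρ * b s) {e : ℕ} (he : T ≤ e) (k : ℕ) :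
    b (e + k) ≤ ρ ^ k * b e := by
  induction k with
  | zero => simp
  | succ k ih =>
    calc b (e + k + 1) ≤ ρ * b (e + k) := hb _ (by omega)
      _ ≤ ρ * (ρ ^ k * b e) := by gcongr
      _ = _ := by ring

lemma left_iterate {c : ℕ → ℝ} {ρ : ℝ} (hρ : 0 ≤ ρ) {T : ℕ}
    (hc : ∀ d, d < T → c d ≤ ρ * c (d + 1)) (d k : ℕ) (h : d + k ≤ T) :
    c d ≤ ρ ^ k * c (d + k) := by
  induction k with
  | zero => simp
  | succ k ih =>
    calc c d ≤ ρ ^ k * c (d + k) := ih (by omega)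
      _ ≤ ρ ^ k * (ρ * c (d + k + 1)) := by gcongr; exact hc _ (by omega)
      _ = _ := by rw [← add_assoc d k 1]; ring

/-- The point `e` is the median of `d`, `s` and `T`. -/
lemma exists_diagonal_bound {b c : ℕ → ℝ} {ρ : ℝ} (hρ : 0 ≤ ρ) {T : ℕ}
    (hb0 : ∀ s, 0 ≤ b s) (hc0 : ∀ d, 0 ≤ c d)
    (hb : ∀ s, T ≤ s → b (s + 1) ≤ ρ * b s)
    (hc : ∀ d, d < T → c d ≤ ρ * c (d + 1)) {s d : ℕ} (h : d < s) :
    ∃ e ≤ s, b s * c d ≤ ρ ^ Nat.dist s e * ρ ^ Nat.dist d e * (b e * c e) := by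
  have key : ∀ e, d ≤ e → e ≤ s → (T ≤ e ∨ e = s) → (e ≤ T ∨ e = d) →
      b s * c d ≤ ρ ^ Nat.dist s e * ρ ^ Nat.dist d e * (b e * c e) := by
    intro e hde hes h1 h2
    have hbs : b s ≤ ρ ^ (s - e) * b e := by
      rcases h1 with h1 | rfl
      · simpa [Nat.add_sub_cancel' hes] using right_iterate hρ hb h1 (s - e)
      · simp
    have hcd : c d ≤ ρ ^ (e - d) * c e := by
      rcases h2 with h2 | rfl
      · simpa [Nat.add_sub_cancel' hde] using left_iterate hρ hc d (e - d) (by omega)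
      · simp
    rw [Nat.dist_eq_sub_of_le_right hes, Nat.dist_eq_sub_of_le hde]
    calc b s * c d ≤ (ρ ^ (s - e) * b e) * (ρ ^ (e - d) * c e) :=
          mul_le_mul hbs hcd (hc0 d) (mul_nonneg (by positivity) (hb0 e))
      _ = _ := by ring
  rcases le_total s T with h1 | h1
  · exact ⟨s, le_rfl, key s h.le le_rfl (Or.inr rfl) (Or.inl h1)⟩
  rcases le_total T d with h2 | h2
  · exact ⟨d, h.le, key d le_rfl h.le (Or.inl h2) (Or.inr rfl)⟩
  · exact ⟨T, h1, key T h2 h1 (Or.inl le_rfl) (Or.inl le_rfl)⟩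

lemma sum_pow_dist_le {ρ : ℝ} (h0 : 0 ≤ ρ) (h1 : ρ < 1) (N e : ℕ) :
    ∑ s ∈ range N, ρ ^ Nat.dist s e ≤ 2 / (1 - ρ) := by
  have hpos : 0 < 1 - ρ := by linarith
  -- The sharper bound makes the induction on `e` (shifting `N` along with it) go through.
  suffices H : ∑ s ∈ range N, ρ ^ Nat.dist s e ≤ (2 - ρ ^ e) / (1 - ρ) from
    H.trans (by gcongr; linarith [pow_nonneg h0 e])
  induction e generalizing N with
  | zero =>
    simp only [Nat.dist_zero_right, pow_zero]
    rw [le_div_iff₀ hpos, geom_sum_mul_neg]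
    linarith [pow_nonneg h0 N]
  | succ e ih =>
    cases N with
    | zero =>
      have : ρ ^ (e + 1) ≤ 1 := pow_le_one₀ h0 h1.le
      simp only [range_zero, sum_empty]
      exact div_nonneg (by linarith) hpos.le
    | succ N =>
      rw [sum_range_succ']
      simp only [Nat.dist_succ_succ, Nat.dist_zero_left]
      have hN := ih N
      rw [le_div_iff₀ hpos] at hN ⊢
      have := mul_nonneg (mul_nonneg (pow_nonneg h0 e) hpos.le) hpos.le
      rw [pow_succ]
      nlinarith

lemma sum_offdiag_le {b c : ℕ → ℝ} {ρ : ℝ} (h0 : 0 ≤ ρ) (h1 : ρ < 1) {T : ℕ}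
    (hb0 : ∀ s, 0 ≤ b s) (hc0 : ∀ d, 0 ≤ c d)
    (hb : ∀ s, T ≤ s → b (s + 1) ≤ ρ * b s)
    (hc : ∀ d, d < T → c d ≤ ρ * c (d + 1)) (N M : ℕ) :
    ∑ s ∈ range N, ∑ d ∈ range M, (if d < s then b s * c d else 0)
      ≤ (2 / (1 - ρ)) ^ 2 * ∑ e ∈ range N, b e * c e := by
  have hL : 0 ≤ 2 / (1 - ρ) := div_nonneg zero_le_two (by linarith)
  have hterm : ∀ s d e, 0 ≤ ρ ^ Nat.dist s e * ρ ^ Nat.dist d e * (b e * c e) := fun s d e =>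
    mul_nonneg (by positivity) (mul_nonneg (hb0 e) (hc0 e))
  calc ∑ s ∈ range N, ∑ d ∈ range M, (if d < s then b s * c d else 0)
      ≤ ∑ s ∈ range N, ∑ d ∈ range M, ∑ e ∈ range N,
          ρ ^ Nat.dist s e * ρ ^ Nat.dist d e * (b e * c e) := by
        refine sum_le_sum fun s hs => sum_le_sum fun d _ => ?_
        split_ifs with h
        · obtain ⟨e, hes, he⟩ := exists_diagonal_bound h0 hb0 hc0 hb hc h
          exact he.trans (single_le_sum (f := fun e =>
            ρ ^ Nat.dist s e * ρ ^ Nat.dist d e * (b e * c e)) (fun e _ => hterm s d e)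
            (mem_range.mpr (hes.trans_lt (mem_range.mp hs))))
        · exact sum_nonneg fun e _ => hterm s d e
    _ = ∑ e ∈ range N, (∑ s ∈ range N, ρ ^ Nat.dist s e) *
          (∑ d ∈ range M, ρ ^ Nat.dist d e) * (b e * c e) := by
        simp_rw [sum_mul_sum, sum_mul]
        rw [sum_comm (s := range N) (t := range N)]
        exact sum_congr rfl fun s _ => sum_comm
    _ ≤ ∑ e ∈ range N, (2 / (1 - ρ)) ^ 2 * (b e * c e) := by
        refine sum_le_sum fun e _ => mul_le_mul_of_nonneg_right ?_ (mul_nonneg (hb0 e) (hc0 e))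
        rw [sq]
        exact mul_le_mul (sum_pow_dist_le h0 h1 _ _) (sum_pow_dist_le h0 h1 _ _)
          (sum_nonneg fun _ _ => by positivity) hL
    _ = _ := by rw [mul_sum]

/-- the estimate `P[S = D₊]/P[S > D₊] ≥ 1/L` in the proof of Lemma 3.6.
Fix constants `0 < q < p < 1`.  There exist constants `L > 0` and `L₂ > 0` such that for all
sufficiently large `n` and all integers `Δ` with `1 ≤ Δ ≤ n/L₂`: if `S ~ Bin(n, q)` and
`D₊ ~ Bin(n+Δ−1, p)` are independent, then `P[S = D₊] ≥ (1/L)·P[S > D₊]`. -/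
theorem binomial_equal_vs_strict_ratio
    (p q : ℝ) (hq : 0 < q) (hqp : q < p) (hp : p < 1) :
    ∃ L : ℝ, 0 < L ∧ ∃ L₂ : ℝ, 0 < L₂ ∧ ∃ N : ℕ, ∀ n : ℕ, N ≤ n →
      ∀ Δ : ℕ, 1 ≤ Δ → (Δ : ℝ) ≤ (n : ℝ) / L₂ →
        binomProb2 n q (n + Δ - 1) p (fun s d => s = d)
          ≥ 1 / L * binomProb2 n q (n + Δ - 1) p (fun s d => d < s) := by
  obtain ⟨t, hqt, htp⟩ := _root_.exists_between hqp
  have ht : 0 < t := hq.trans hqt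
  have ht1 : t < 1 := htp.trans hp
  have hp0 : 0 < p := hq.trans hqp
  have hq1 : q < 1 := hqp.trans hp
  have hA : 0 < (1 - q) * t := mul_pos (by linarith) ht
  have hB : 0 < (1 - t) * p := mul_pos (by linarith) hp0
  -- The two quotients are the limiting ratios of consecutive masses of `Bin(n, q)` and of
  -- `Bin(m, p)` near `t n` and `t m`.
  obtain ⟨ρ, hρ, hρ1⟩ : ∃ ρ, max (q * (1 - t) / ((1 - q) * t)) (t * (1 - p) / ((1 - t) * p)) < ρ
      ∧ ρ < 1 := by
    apply _root_.exists_between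
    rw [max_lt_iff, div_lt_one hA, div_lt_one hB]
    constructor <;> nlinarith
  obtain ⟨hρA, hρB⟩ := max_lt_iff.mp hρ
  have hρ0 : 0 ≤ ρ := (div_nonneg (mul_nonneg hq.le (by linarith)) hA.le).trans hρA.le
  rw [div_lt_iff₀ hA] at hρA
  rw [div_lt_iff₀ hB] at hρB
  have hε : 0 < ρ * ((1 - q) * t) - q * (1 - t) := by linarith
  obtain ⟨N, hN⟩ := exists_nat_ge (q / (ρ * ((1 - q) * t) - q * (1 - t)))
  have hL : 0 < (2 / (1 - ρ)) ^ 2 := pow_pos (div_pos two_pos (by linarith)) 2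
  refine ⟨(2 / (1 - ρ)) ^ 2, hL, 1, one_pos, N, fun n hn Δ hΔ _ => ?_⟩
  have hnm : n ≤ n + Δ - 1 := by omega
  generalize n + Δ - 1 = m at hnm
  have hn' : q ≤ n * (ρ * ((1 - q) * t) - q * (1 - t)) := by
    rw [← div_le_iff₀ hε]
    exact hN.trans (by exact_mod_cast hn)
  have heq : binomProb2 n q m p (fun s d => s = d)
      = ∑ e ∈ range (n + 1), binomPMF n q e * binomPMF m p e := by
    refine sum_congr rfl fun s hs => ?_
    have hsm : s < m + 1 := by have := mem_range.mp hs; omega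
    simp [Set.indicator_apply, hsm]
  have hlt : binomProb2 n q m p (fun s d => d < s)
      = ∑ s ∈ range (n + 1), ∑ d ∈ range (m + 1),
          (if d < s then binomPMF n q s * binomPMF m p d else 0) := by
    simp [binomProb2, Set.indicator_apply]
  have main := sum_offdiag_le hρ0 hρ1 (T := ⌊t * n⌋₊)
    (binomPMF_nonneg (m := n) hq.le hq1.le) (binomPMF_nonneg (m := m) hp0.le hp.le)
    (fun s hs => binomPMF_right_decay hq hq1 hρ0 hn' hs)
    (fun d hd => binomPMF_left_decay hnm hp0 hp ht ht1 hρ0 hρB.le hd) (n + 1) (m + 1)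
  rw [heq, hlt, ge_iff_le, one_div, inv_mul_le_iff₀ hL]
  exact main
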